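/- arXiv:1811.03843 — 7 statements merged into one kernel-verified Lean document; each statement's English description precedes it below -/
import Mathlib

section
/- If m is not a root of unity (i.e., m^n ≠ 1 for every integer n ≥ 1), then the linear span of the vectors 1, A^n, B^n (n ≥ 2) is a linear complement in R of the Lie subalgebra L of R generated by A and B; that is, R = L ⊕ span_F{1, A^n, B^n : n ≥ 2} as F-vector spaces. -/
noncomputable section

open FreeAlgebra

attribute [local instance 100] LieRing.ofAssociativeRing

/-- The defining relation `A*B = m • (B*A) + b·1` on the free algebra `F⟨A,B⟩`
(the free unital associative algebra on two generators `A = ι F 0`, `B = ι F 1`). -/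
def twistRel (F : Type*) [Field F] (m b : F) :
    FreeAlgebra F (Fin 2) → FreeAlgebra F (Fin 2) → Prop :=
  fun p q => p = ι F 0 * ι F 1 ∧
    q = m • (ι F 1 * ι F 0) + algebraMap F (FreeAlgebra F (Fin 2)) b

/-- `R = F⟨A,B⟩ / (AB − m·BA − b·1)`. -/
abbrev TwistAlg (F : Type*) [Field F] (m b : F) := RingQuot (twistRel F m b)

/-- The image of the generator `A` in `R`. -/
def genA (F : Type*) [Field F] (m b : F) : TwistAlg F m b :=
  RingQuot.mkAlgHom F (twistRel F m b) (ι F 0)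

/-- The image of the generator `B` in `R`. -/
def genB (F : Type*) [Field F] (m b : F) : TwistAlg F m b :=
  RingQuot.mkAlgHom F (twistRel F m b) (ι F 1)

/-- `C := A*B − B*A` in `R`. -/
def genC (F : Type*) [Field F] (m b : F) : TwistAlg F m b :=
  genA F m b * genB F m b - genB F m b * genA F m b

section helpers

variable {F R : Type*} [Field F] [Ring R] [Algebra F R]

theorem relAB (F : Type*) [Field F] (m b : F) :
    genA F m b * genB F m b = m • (genB F m b * genA F m b) + algebraMap F _ b := by
  have h := RingQuot.mkAlgHom_rel F (s := twistRel F m b)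
    (x := ι F 0 * ι F 1)
    (y := m • (ι F 1 * ι F 0) + algebraMap F (FreeAlgebra F (Fin 2)) b) ⟨rfl, rfl⟩
  simpa [genA, genB] using h

theorem ACk {m : F} {A C : R} (h : A * C = m • (C * A)) (k : ℕ) :
    A * C ^ k = m ^ k • (C ^ k * A) := by
  induction k with
  | zero => simp
  | succ k ih =>
    rw [pow_succ, ← mul_assoc, ih, smul_mul_assoc, mul_assoc, h, mul_smul_comm, smul_smul,
      ← mul_assoc, pow_succ]

theorem CkB {m : F} {B C : R} (h : C * B = m • (B * C)) (k : ℕ) :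
    C ^ k * B = m ^ k • (B * C ^ k) := by
  induction k with
  | zero => simp
  | succ k ih =>
    rw [pow_succ', mul_assoc, ih, mul_smul_comm, ← mul_assoc, h, smul_mul_assoc, smul_smul,
      mul_assoc, pow_succ]

theorem CBl {m : F} {B C : R} (h : C * B = m • (B * C)) (k : ℕ) :
    C * B ^ k = m ^ k • (B ^ k * C) := ACk h k

theorem lie_mem {m b : F} (hm0 : m ≠ 0) (hroot : ∀ n : ℕ, 1 ≤ n → m ^ n ≠ 1)
    {A B C : R} (hAC : A * C = m • (C * A)) (hCB : C * B = m • (B * C))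
    (hBA : (m - 1) • (B * A) = C - b • (1 : R)) (hAB : (m - 1) • (A * B) = m • C - b • (1 : R))
    (P : Submodule F R) (hA : A ∈ P) (hB : B ∈ P) (hC : C ∈ P)
    (hbr : ∀ x ∈ P, ∀ y ∈ P, x * y - y * x ∈ P) (k : ℕ) :
    ∀ l, C ^ (k + 1) * A ^ l ∈ P ∧ B ^ l * C ^ (k + 1) ∈ P := by
  have step : ∀ k : ℕ, C ^ (k + 1) ∈ P →
      ∀ l, C ^ (k + 1) * A ^ l ∈ P ∧ B ^ l * C ^ (k + 1) ∈ P := by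
    intro k hk l
    have hne : m ^ (k + 1) - 1 ≠ 0 := sub_ne_zero.2 (hroot _ (by omega))
    have hsub : ∀ x : R, m ^ (k + 1) • x - x = (m ^ (k + 1) - 1) • x := fun x => by module
    induction l with
    | zero => simpa using hk
    | succ l ih =>
      constructor
      · have := hbr _ hA _ ih.1
        rw [← mul_assoc, ACk hAC, smul_mul_assoc, mul_assoc, mul_assoc, ← pow_succ', ← pow_succ,
          hsub] at this
        exact (P.smul_mem_iff hne).1 this
      · have := hbr _ ih.2 _ hB
        rw [mul_assoc, CkB hCB, mul_smul_comm, ← mul_assoc, ← mul_assoc, ← pow_succ', ← pow_succ,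
          hsub] at this
        exact (P.smul_mem_iff hne).1 this
  apply step
  induction k with
  | zero => simpa using hC
  | succ k ih =>
    have h1 := hbr _ (step k ih 1).1 _ hB
    rw [pow_one] at h1
    have h2 : (m ^ (k + 1) * (m - 1)) • (C ^ (k + 1) * A * B - B * (C ^ (k + 1) * A)) =
        (m ^ (k + 2) - 1) • C ^ (k + 1 + 1) - (b * (m ^ (k + 1) - 1)) • C ^ (k + 1) := by
      have e1 : (m - 1) • (C ^ (k + 1) * A * B)
          = m • C ^ (k + 1 + 1) - b • C ^ (k + 1) := by
        rw [mul_assoc, ← mul_smul_comm, hAB, mul_sub, mul_smul_comm, mul_smul_comm, mul_one,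
          ← pow_succ]
      have e2 : (m ^ (k + 1) * (m - 1)) • (B * (C ^ (k + 1) * A))
          = C ^ (k + 1 + 1) - b • C ^ (k + 1) := by
        rw [← mul_assoc, mul_comm, mul_smul, ← smul_mul_assoc, ← CkB hCB, mul_assoc,
          ← mul_smul_comm, hBA, mul_sub, mul_smul_comm, mul_one, ← pow_succ]
      rw [smul_sub, e2, mul_smul, e1]
      module
    have h3 := P.smul_mem (m ^ (k + 1) * (m - 1)) h1
    rw [h2] at h3
    have h4 := P.add_mem h3 (P.smul_mem (b * (m ^ (k + 1) - 1)) ih)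
    rw [sub_add_cancel] at h4
    exact (P.smul_mem_iff (sub_ne_zero.2 (hroot _ (by omega)))).1 h4

theorem mul_closed {m b : F} (hm0 : m ≠ 0) (hm1 : m - 1 ≠ 0)
    {A B C : R} (hAC : A * C = m • (C * A)) (hCB : C * B = m • (B * C))
    (hBA : (m - 1) • (B * A) = C - b • (1 : R)) (hAB : (m - 1) • (A * B) = m • C - b • (1 : R)) :
    ∃ M : Submodule F R, M = Submodule.span F
      {w | ∃ k l : ℕ, w = C ^ k * A ^ l ∨ w = B ^ l * C ^ k} ∧
      (∀ v ∈ M, A * v ∈ M) ∧ (∀ v ∈ M, B * v ∈ M) := by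
  refine ⟨_, rfl, ?_, ?_⟩
  all_goals
    set M := Submodule.span F {w | ∃ k l : ℕ, w = C ^ k * A ^ l ∨ w = B ^ l * C ^ k} with hM
    have m1 : ∀ k l, C ^ k * A ^ l ∈ M := fun k l => Submodule.subset_span ⟨k, l, Or.inl rfl⟩
    have m2 : ∀ k l, B ^ l * C ^ k ∈ M := fun k l => Submodule.subset_span ⟨k, l, Or.inr rfl⟩
    intro v hv
    refine Submodule.span_induction (p := fun v _ => _ * v ∈ M) ?_ (by simp)
      (fun x y _ _ hx hy => by rw [mul_add]; exact M.add_mem hx hy)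
      (fun a x _ hx => by rw [mul_smul_comm]; exact M.smul_mem a hx) hv
    rintro _ ⟨k, l, rfl | rfl⟩
  · rw [← mul_assoc, ACk hAC, smul_mul_assoc, mul_assoc, ← pow_succ']
    exact M.smul_mem _ (m1 _ _)
  · cases l with
    | zero =>
      rw [pow_zero, one_mul, ACk hAC]
      simpa using M.smul_mem (m ^ k) (m1 k 1)
    | succ l =>
      apply (M.smul_mem_iff hm1).1
      rw [pow_succ', mul_assoc B, ← mul_assoc A, ← smul_mul_assoc, hAB, sub_mul, smul_mul_assoc,
        smul_mul_assoc, one_mul, ← mul_assoc, CBl hCB, smul_mul_assoc, mul_assoc, ← pow_succ']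
      exact M.sub_mem (M.smul_mem _ (M.smul_mem _ (m2 _ _))) (M.smul_mem _ (m2 _ _))
  · cases l with
    | zero => simpa using m2 k 1
    | succ l =>
      have hne : m ^ k ≠ 0 := pow_ne_zero _ hm0
      apply (M.smul_mem_iff hne).1
      apply (M.smul_mem_iff hm1).1
      rw [← mul_assoc, ← smul_mul_assoc, ← CkB hCB, pow_succ', ← mul_assoc, mul_assoc _ B A,
        ← smul_mul_assoc, ← mul_smul_comm, hBA, mul_sub, ← pow_succ, mul_smul_comm, mul_one,
        sub_mul, smul_mul_assoc]
      exact M.sub_mem (m1 _ _) (M.smul_mem _ (m1 _ _))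
  · rw [← mul_assoc, ← pow_succ']
    exact m2 _ _

/-- raising operator -/
def opA (c : F) : Module.End F (ℤ →₀ F) :=
  Finsupp.lsum F fun n => (if 0 ≤ n then (1 : F) else c) • Finsupp.lsingle (n + 1)

/-- lowering operator -/
def opB (c : F) : Module.End F (ℤ →₀ F) :=
  Finsupp.lsum F fun n => (if n ≤ 0 then (1 : F) else c) • Finsupp.lsingle (n - 1)

theorem opAB (c : F) : opA c * opB c = algebraMap F _ c := by
  ext n : 2
  rcases le_or_gt n 0 with h | h
  · have : ¬ (1 ≤ n) := by omega
    simp [opA, opB, h, this]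
  · have h' : ¬ (n ≤ 0) := by omega
    have : (1 ≤ n) := by omega
    simp [opA, opB, h', this]

theorem opBA (c : F) : opB c * opA c = algebraMap F _ c := by
  ext n : 2
  rcases le_or_gt 0 n with h | h
  · have : ¬ (n + 1 ≤ 0) := by omega
    simp [opA, opB, h, this]
  · have h' : ¬ (0 ≤ n) := by omega
    have : (n + 1 ≤ 0) := by omega
    simp [opA, opB, h', this]

theorem opA_pow (c : F) (n : ℕ) :
    (opA c ^ n) (Finsupp.single 0 1) = Finsupp.single (n : ℤ) (1 : F) := by
  induction n with
  | zero => simp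
  | succ n ih => rw [pow_succ', Module.End.mul_apply, ih]; simp [opA]

theorem opB_pow (c : F) (n : ℕ) :
    (opB c ^ n) (Finsupp.single 0 1) = Finsupp.single (-n : ℤ) (1 : F) := by
  induction n with
  | zero => simp
  | succ n ih =>
    rw [pow_succ', Module.End.mul_apply, ih]; simp [opB]; congr 1; ring

theorem exists_rep (m b : F) (hm1 : m ≠ 1) : ∃ (c : F) (φ : TwistAlg F m b →ₐ[F] Module.End F (ℤ →₀ F)),
    φ (genA F m b) = opA c ∧ φ (genB F m b) = opB c ∧ ∀ x y, φ x * φ y = φ y * φ x := by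
  have h1 : 1 - m ≠ 0 := sub_ne_zero.2 hm1.symm
  let c := b / (1 - m)
  have hc : c = m * c + b := by simp only [c]; field_simp; ring
  let ψ : FreeAlgebra F (Fin 2) →ₐ[F] Module.End F (ℤ →₀ F) :=
    FreeAlgebra.lift F ![opA c, opB c]
  have hψ : ∀ ⦃x y⦄, twistRel F m b x y → ψ x = ψ y := by
    rintro _ _ ⟨rfl, rfl⟩
    simp only [ψ, map_mul, map_add, map_smul, FreeAlgebra.lift_ι_apply, AlgHom.commutes]
    simp only [Matrix.cons_val_zero, Matrix.cons_val_one, opAB, opBA]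
    rw [Algebra.smul_def, ← map_mul, ← map_add, ← hc]
  let φ := RingQuot.liftAlgHom F ⟨ψ, hψ⟩
  have hφ : ∀ x, φ (RingQuot.mkAlgHom F _ x) = ψ x := fun x =>
    RingQuot.liftAlgHom_mkAlgHom_apply F ψ hψ x
  refine ⟨c, φ, by simp [genA, hφ, ψ], by simp [genB, hφ, ψ], ?_⟩
  have hgen : ∀ i j, Commute (ψ (ι F i)) (ψ (ι F j)) := by
    have e : opA c * opB c = opB c * opA c := by rw [opAB, opBA]
    intro i j
    fin_cases i <;> fin_cases j <;> simp [ψ, Commute, SemiconjBy, e]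
  have hcomm : ∀ x y, Commute (ψ x) (ψ y) := by
    intro x y
    induction x using FreeAlgebra.induction with
    | grade0 r => rw [AlgHom.commutes]; exact Algebra.commute_algebraMap_left _ _
    | grade1 i =>
      induction y using FreeAlgebra.induction with
      | grade0 r => rw [AlgHom.commutes]; exact Algebra.commute_algebraMap_right _ _
      | grade1 j => exact hgen i j
      | mul a b ha hb => rw [map_mul]; exact ha.mul_right hb
      | add a b ha hb => rw [map_add]; exact ha.add_right hb
    | mul a b ha hb => rw [map_mul]; exact ha.mul_left hb
    | add a b ha hb => rw [map_add]; exact ha.add_left hb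
  intro x y
  obtain ⟨x, rfl⟩ := RingQuot.mkAlgHom_surjective F _ x
  obtain ⟨y, rfl⟩ := RingQuot.mkAlgHom_surjective F _ y
  rw [hφ, hφ]
  exact hcomm x y

end helpers

theorem stmt0 (F : Type*) [Field F] (m b : F) (hm0 : m ≠ 0) (hm1 : m ≠ 1)
    (hroot : ∀ n : ℕ, 1 ≤ n → m ^ n ≠ 1) :
    IsCompl
      (LieSubalgebra.lieSpan F (TwistAlg F m b) {genA F m b, genB F m b}).toSubmodule
      (Submodule.span F
        ({(1 : TwistAlg F m b)} ∪
         {w | ∃ n : ℕ, 2 ≤ n ∧ w = genA F m b ^ n} ∪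
         {w | ∃ n : ℕ, 2 ≤ n ∧ w = genB F m b ^ n})) := by
  have hm1' : m - 1 ≠ 0 := sub_ne_zero.2 hm1
  set L := LieSubalgebra.lieSpan F (TwistAlg F m b) {genA F m b, genB F m b} with hL
  set S := Submodule.span F
        ({(1 : TwistAlg F m b)} ∪
         {w | ∃ n : ℕ, 2 ≤ n ∧ w = genA F m b ^ n} ∪
         {w | ∃ n : ℕ, 2 ≤ n ∧ w = genB F m b ^ n}) with hS
  have hAL : genA F m b ∈ L := LieSubalgebra.subset_lieSpan (by simp)
  have hBL : genB F m b ∈ L := LieSubalgebra.subset_lieSpan (by simp)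
  have hbr : ∀ x ∈ L.toSubmodule, ∀ y ∈ L.toSubmodule, x * y - y * x ∈ L.toSubmodule :=
    fun x hx y hy => L.lie_mem hx hy
  constructor
  · obtain ⟨c, φ, hφA, hφB, hφc⟩ := exists_rep m b hm1
    let f : TwistAlg F m b →ₗ[F] (ℤ →₀ F) :=
      (LinearMap.applyₗ (Finsupp.single (0 : ℤ) (1 : F))).comp φ.toLinearMap
    have hf : ∀ x, f x = φ x (Finsupp.single 0 1) := fun x => rfl
    have hfA : ∀ n : ℕ, f (genA F m b ^ n) = Finsupp.single (n : ℤ) 1 := fun n => by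
      rw [hf, map_pow, hφA, opA_pow]
    have hfB : ∀ n : ℕ, f (genB F m b ^ n) = Finsupp.single (-n : ℤ) 1 := fun n => by
      rw [hf, map_pow, hφB, opB_pow]
    -- the Lie algebra maps to the span of e_1, e_{-1}
    have hLf : ∀ x ∈ L, ∀ n : ℤ, n ≠ 1 → n ≠ -1 → f x n = 0 := by
      intro x hx n h1 h2
      induction hx using LieSubalgebra.lieSpan_induction with
      | mem x hx =>
        rcases hx with rfl | rfl
        · have := hfA 1
          rw [pow_one] at this
          rw [this, Finsupp.single_apply, if_neg (by push_cast; omega)]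
        · have := hfB 1
          rw [pow_one] at this
          rw [this, Finsupp.single_apply, if_neg (by push_cast; omega)]
      | zero => simp
      | add x y _ _ hx hy => rw [map_add, Finsupp.add_apply, hx, hy, add_zero]
      | smul a x _ hx => rw [map_smul, Finsupp.smul_apply, hx, smul_zero]
      | lie x y _ _ _ _ =>
        have : f ⁅x, y⁆ = 0 := by
          rw [LieRing.of_associative_ring_bracket, hf, map_sub, map_mul, map_mul, hφc x y,
            sub_self, LinearMap.zero_apply]
        rw [this, Finsupp.zero_apply]
    -- a section of f on the complement
    let g : (ℤ →₀ F) →ₗ[F] TwistAlg F m b := Finsupp.lsum F fun n =>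
      LinearMap.toSpanSingleton F _
        (if n = 1 ∨ n = -1 then 0 else if 0 ≤ n then genA F m b ^ n.toNat
          else genB F m b ^ (-n).toNat)
    have hg : ∀ n : ℤ, g (Finsupp.single n 1) =
        (if n = 1 ∨ n = -1 then 0 else if 0 ≤ n then genA F m b ^ n.toNat
          else genB F m b ^ (-n).toNat) := fun n => by simp [g]
    have hgf : ∀ x ∈ S, g (f x) = x := by
      intro x hx
      refine Submodule.span_induction (p := fun x _ => g (f x) = x) ?_ (by simp)
        (fun x y _ _ hx hy => by rw [map_add, map_add, hx, hy])
        (fun a x _ hx => by rw [map_smul, map_smul, hx]) hx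
      rintro x ((rfl | ⟨n, hn, rfl⟩) | ⟨n, hn, rfl⟩)
      · have := hfA 0
        rw [pow_zero] at this
        rw [this, hg]
        simp
      · rw [hfA, hg, if_neg (by omega), if_pos (by omega)]
        simp
      · rw [hfB, hg, if_neg (by omega), if_neg (by omega)]
        simp
    have hgL : ∀ x ∈ L, g (f x) = 0 := by
      intro x hx
      simp only [g, Finsupp.lsum_apply, Finsupp.sum]
      refine Finset.sum_eq_zero fun n _ => ?_
      by_cases h : n = 1 ∨ n = -1
      · simp [h]
      · push Not at h
        rw [hLf x hx n h.1 h.2, map_zero]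
    rw [Submodule.disjoint_def]
    intro x hx hxS
    rw [← hgf x hxS, hgL x hx]
  · have hrel := relAB F m b
    set A := genA F m b with hAdef
    set B := genB F m b with hBdef
    rw [Algebra.algebraMap_eq_smul_one] at hrel
    obtain ⟨C, hC⟩ : ∃ C, C = A * B - B * A := ⟨_, rfl⟩
    have hC' : C = (m - 1) • (B * A) + b • (1 : TwistAlg F m b) := by
      rw [hC, hrel]; module
    have hBA : (m - 1) • (B * A) = C - b • (1 : TwistAlg F m b) := by rw [hC']; module
    have hAB : (m - 1) • (A * B) = m • C - b • (1 : TwistAlg F m b) := by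
      rw [hC', hrel]; module
    have hAC : A * C = m • (C * A) := by
      rw [hC', mul_add, add_mul, mul_smul_comm, ← mul_assoc, hrel, add_mul]
      simp only [smul_mul_assoc, mul_smul_comm, one_mul, mul_one]
      module
    have hCB : C * B = m • (B * C) := by
      rw [hC', mul_add, add_mul, smul_mul_assoc, mul_assoc, hrel, mul_add]
      simp only [smul_mul_assoc, mul_smul_comm, one_mul, mul_one]
      module
    have hCL : C ∈ L.toSubmodule := by rw [hC]; exact hbr _ hAL _ hBL
    have hmem := lie_mem hm0 hroot hAC hCB hBA hAB L.toSubmodule hAL hBL hCL hbr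
    obtain ⟨M, hM, hMA, hMB⟩ := mul_closed hm0 hm1' hAC hCB hBA hAB
    have hMle : M ≤ L.toSubmodule ⊔ S := by
      have hSA : ∀ n, A ^ n ∈ L.toSubmodule ⊔ S := by
        intro n
        match n with
        | 0 => exact Submodule.mem_sup_right (Submodule.subset_span (by simp))
        | 1 => rw [pow_one]; exact Submodule.mem_sup_left hAL
        | n + 2 =>
          exact Submodule.mem_sup_right (Submodule.subset_span
            (Or.inl (Or.inr ⟨n + 2, by omega, rfl⟩)))
      have hSB : ∀ n, B ^ n ∈ L.toSubmodule ⊔ S := by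
        intro n
        match n with
        | 0 => exact Submodule.mem_sup_right (Submodule.subset_span (by simp))
        | 1 => rw [pow_one]; exact Submodule.mem_sup_left hBL
        | n + 2 =>
          exact Submodule.mem_sup_right (Submodule.subset_span
            (Or.inr ⟨n + 2, by omega, rfl⟩))
      rw [hM, Submodule.span_le]
      rintro _ ⟨k, l, rfl | rfl⟩
      · cases k with
        | zero => simpa using hSA l
        | succ k => exact Submodule.mem_sup_left (hmem k l).1
      · cases k with
        | zero => simpa using hSB l
        | succ k => exact Submodule.mem_sup_left (hmem k l).2
    have h1M : (1 : TwistAlg F m b) ∈ M := by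
      rw [hM]; exact Submodule.subset_span ⟨0, 0, Or.inl (by simp)⟩
    have hall : ∀ x : FreeAlgebra F (Fin 2), ∀ v ∈ M,
        RingQuot.mkAlgHom F (twistRel F m b) x * v ∈ M := by
      intro x
      induction x using FreeAlgebra.induction with
      | grade0 r =>
        intro v hv
        rw [AlgHom.commutes, ← Algebra.smul_def]
        exact M.smul_mem _ hv
      | grade1 i =>
        fin_cases i
        · exact hMA
        · exact hMB
      | mul x y hx hy =>
        intro v hv
        rw [map_mul, mul_assoc]
        exact hx _ (hy _ hv)
      | add x y hx hy =>
        intro v hv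
        rw [map_add, add_mul]
        exact M.add_mem (hx _ hv) (hy _ hv)
    rw [codisjoint_iff, eq_top_iff]
    intro x _
    obtain ⟨x, rfl⟩ := RingQuot.mkAlgHom_surjective F _ x
    apply hMle
    have := hall x 1 h1M
    rwa [mul_one] at this
end
end

section
/- In the free unital associative algebra F⟨A,B,C⟩ on three generators A, B, C, the two-sided ideal generated by the two elements ζ₁ = AB − m·BA − b·1 and ζ₂ = C − AB + BA is equal to the two-sided ideal generated by the elements (m−1)·AB − (m·C − b·1), AC − m·CA, (m−1)·BA − (C − b·1), CB − m·BC, and m^k(m−1)·BC^kA − (C^{k+1} − b·C^k) for all integers k ≥ 1. -/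
noncomputable section

open FreeAlgebra

/-- The generator `A` of the free algebra `F⟨A,B,C⟩` on three generators. -/
def fA (F : Type*) [Field F] : FreeAlgebra F (Fin 3) := ι F 0

/-- The generator `B` of the free algebra `F⟨A,B,C⟩` on three generators. -/
def fB (F : Type*) [Field F] : FreeAlgebra F (Fin 3) := ι F 1

/-- The generator `C` of the free algebra `F⟨A,B,C⟩` on three generators. -/
def fC (F : Type*) [Field F] : FreeAlgebra F (Fin 3) := ι F 2

theorem smul_mem_aux {F R : Type*} [Field F] [Ring R] [Algebra F R] (I : TwoSidedIdeal R)
    (c : F) {x : R} (hx : x ∈ I) : c • x ∈ I := by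
  rw [Algebra.smul_def]; exact I.mul_mem_left _ _ hx

theorem pow_mem_aux {F R : Type*} [Field F] [Ring R] [Algebra F R] (I : TwoSidedIdeal R)
    (m : F) (A C : R) (h : A * C - m • (C * A) ∈ I) (k : ℕ) :
    A * C ^ k - m ^ k • (C ^ k * A) ∈ I := by
  induction k with
  | zero => simp
  | succ k ih =>
    have e : A * C ^ (k + 1) - m ^ (k + 1) • (C ^ (k + 1) * A) =
        (A * C ^ k - m ^ k • (C ^ k * A)) * C + m ^ k • (C ^ k * (A * C - m • (C * A))) := by
      simp only [pow_succ, mul_sub, sub_mul, smul_sub, mul_smul_comm, smul_mul_assoc, mul_assoc,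
        mul_smul]
      abel
    rw [e]
    exact I.add_mem (I.mul_mem_right _ _ ih) (smul_mem_aux I _ (I.mul_mem_left _ _ h))

theorem span_aux {F R : Type*} [Field F] [Ring R] [Algebra F R] (m b : F) (hm1 : m ≠ 1)
    (A B C : R) :
    TwoSidedIdeal.span ({A * B - m • (B * A) - algebraMap F R b, C - A * B + B * A} : Set R) =
    TwoSidedIdeal.span
      (({(m - 1) • (A * B) - (m • C - algebraMap F R b), A * C - m • (C * A),
         (m - 1) • (B * A) - (C - algebraMap F R b), C * B - m • (B * C)} : Set R) ∪
       {w | ∃ k : ℕ, 1 ≤ k ∧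
          w = (m ^ k * (m - 1)) • (B * C ^ k * A) - (C ^ (k + 1) - b • C ^ k)}) := by
  simp only [Algebra.algebraMap_eq_smul_one]
  apply le_antisymm
  · rw [TwoSidedIdeal.span_le]
    set J := TwoSidedIdeal.span
      (({(m - 1) • (A * B) - (m • C - b • (1 : R)), A * C - m • (C * A),
         (m - 1) • (B * A) - (C - b • (1 : R)), C * B - m • (B * C)} : Set R) ∪
       {w | ∃ k : ℕ, 1 ≤ k ∧
          w = (m ^ k * (m - 1)) • (B * C ^ k * A) - (C ^ (k + 1) - b • C ^ k)}) with hJ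
    have g1 : (m - 1) • (A * B) - (m • C - b • (1 : R)) ∈ J :=
      TwoSidedIdeal.subset_span (by simp)
    have g3 : (m - 1) • (B * A) - (C - b • (1 : R)) ∈ J :=
      TwoSidedIdeal.subset_span (by simp)
    have h0 : m - 1 ≠ 0 := sub_ne_zero.mpr hm1
    have key : ∀ x : R, (m - 1) • x ∈ J → x ∈ J := fun x hx => by
      have := smul_mem_aux J (m - 1)⁻¹ hx
      rwa [inv_smul_smul₀ h0] at this
    rintro x (rfl | rfl)
    · apply key
      have := J.sub_mem g1 (smul_mem_aux J m g3)
      convert this using 1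
      module
    · apply key
      have := J.sub_mem g3 g1
      convert this using 1
      module
  · rw [TwoSidedIdeal.span_le]
    set J := TwoSidedIdeal.span ({A * B - m • (B * A) - b • (1 : R), C - A * B + B * A} : Set R)
      with hJ
    have z1 : A * B - m • (B * A) - b • (1 : R) ∈ J := TwoSidedIdeal.subset_span (by simp)
    have z2 : C - A * B + B * A ∈ J := TwoSidedIdeal.subset_span (by simp)
    have g1 : (m - 1) • (A * B) - (m • C - b • (1 : R)) ∈ J := by
      have := J.sub_mem (J.neg_mem z1) (smul_mem_aux J m z2)
      convert this using 1
      module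
    have g3 : (m - 1) • (B * A) - (C - b • (1 : R)) ∈ J := by
      have := J.sub_mem (J.neg_mem z1) z2
      convert this using 1
      module
    have g2 : A * C - m • (C * A) ∈ J := by
      have := J.sub_mem (J.mul_mem_right _ A g1) (J.mul_mem_left A _ g3)
      convert this using 1
      simp only [mul_sub, sub_mul, mul_smul_comm, smul_mul_assoc, mul_assoc, mul_one, one_mul]
      module
    have g4 : C * B - m • (B * C) ∈ J := by
      have := J.sub_mem (J.mul_mem_left B _ g1) (J.mul_mem_right _ B g3)
      convert this using 1
      simp only [mul_sub, sub_mul, mul_smul_comm, smul_mul_assoc, mul_assoc, mul_one, one_mul]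
      module
    rintro x ((rfl | rfl | rfl | rfl) | ⟨k, -, rfl⟩)
    · exact g1
    · exact g2
    · exact g3
    · exact g4
    · rw [SetLike.mem_coe]
      have := J.sub_mem (J.mul_mem_right _ (C ^ k) g3)
        (smul_mem_aux J (m - 1) (J.mul_mem_left B _ (pow_mem_aux J m A C g2 k)))
      convert this using 1
      simp only [pow_succ', mul_sub, sub_mul, mul_smul_comm, smul_mul_assoc, mul_assoc, mul_one,
        one_mul]
      module

theorem stmt2 (F : Type*) [Field F] (m b : F) (hm0 : m ≠ 0) (hm1 : m ≠ 1) :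
    TwoSidedIdeal.span
      ({fA F * fB F - m • (fB F * fA F) - algebraMap F (FreeAlgebra F (Fin 3)) b,
        fC F - fA F * fB F + fB F * fA F} : Set (FreeAlgebra F (Fin 3))) =
    TwoSidedIdeal.span
      (({(m - 1) • (fA F * fB F) - (m • fC F - algebraMap F (FreeAlgebra F (Fin 3)) b),
         fA F * fC F - m • (fC F * fA F),
         (m - 1) • (fB F * fA F) - (fC F - algebraMap F (FreeAlgebra F (Fin 3)) b),
         fC F * fB F - m • (fB F * fC F)} : Set (FreeAlgebra F (Fin 3))) ∪
       {w | ∃ k : ℕ, 1 ≤ k ∧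
          w = (m ^ k * (m - 1)) • (fB F * fC F ^ k * fA F) -
              (fC F ^ (k + 1) - b • fC F ^ k)}) := by
  exact span_aux m b hm1 (fA F) (fB F) (fC F)
end
end

section
/- For all integers k, l, x, y ≥ 1, the relation [C^k A^l, C^x A^y] = (m^{lx} − m^{ky})·C^{k+x} A^{l+y} holds in R. -/
noncomputable section

open FreeAlgebra

theorem aux_pow {F R : Type*} [Field F] [Ring R] [Algebra F R] (m : F) (A C : R)
    (h : A * C = m • (C * A)) (l x : ℕ) : A ^ l * C ^ x = m ^ (l * x) • (C ^ x * A ^ l) := by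
  have h1 : ∀ x : ℕ, A * C ^ x = m ^ x • (C ^ x * A) := by
    intro x
    induction x with
    | zero => simp
    | succ n ih =>
      rw [pow_succ C, ← mul_assoc, ih, smul_mul_assoc, mul_assoc, h, mul_smul_comm, smul_smul,
        pow_succ, mul_assoc]
  induction l with
  | zero => simp
  | succ n ih =>
    rw [pow_succ A, mul_assoc, h1, mul_smul_comm, ← mul_assoc, ih, smul_mul_assoc, smul_smul,
      mul_assoc, ← pow_add]
    congr 2
    ring

theorem aux_bracket {F R : Type*} [Field F] [Ring R] [Algebra F R] (m : F) (A C : R)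
    (h : A * C = m • (C * A)) (k l x y : ℕ) :
    (C ^ k * A ^ l) * (C ^ x * A ^ y) = m ^ (l * x) • (C ^ (k + x) * A ^ (l + y)) := by
  rw [mul_assoc, ← mul_assoc (A ^ l), aux_pow m A C h, smul_mul_assoc, mul_smul_comm,
    pow_add, pow_add]
  simp only [mul_assoc]

theorem aux_comm {F R : Type*} [Field F] [Ring R] [Algebra F R] (m b : F) (A B : R)
    (h : A * B = m • (B * A) + algebraMap F R b) :
    A * (A * B - B * A) = m • ((A * B - B * A) * A) := by
  have hc : algebraMap F R b * A = A * algebraMap F R b := Algebra.commutes b A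
  have h2 : A * B * A = m • (B * A * A) + A * algebraMap F R b := by
    rw [h, add_mul, smul_mul_assoc, hc]
  have h3 : A * (A * B) = m • (A * B * A) + A * algebraMap F R b := by
    conv_lhs => rw [h]
    rw [mul_add, mul_smul_comm, mul_assoc]
  rw [mul_sub, h3, ← mul_assoc, sub_mul, smul_sub]
  nth_rewrite 2 [h2]
  abel

theorem gen_rel (F : Type*) [Field F] (m b : F) :
    genA F m b * genB F m b = m • (genB F m b * genA F m b) +
      algebraMap F (TwistAlg F m b) b := by
  have := RingQuot.mkAlgHom_rel F (s := twistRel F m b) ⟨rfl, rfl⟩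
  simpa [genA, genB] using this

theorem stmt8 (F : Type*) [Field F] (m b : F) (hm0 : m ≠ 0) (hm1 : m ≠ 1)
    (k l x y : ℕ) (hk : 1 ≤ k) (hl : 1 ≤ l) (hx : 1 ≤ x) (hy : 1 ≤ y) :
    ⁅genC F m b ^ k * genA F m b ^ l, genC F m b ^ x * genA F m b ^ y⁆ =
      (m ^ (l * x) - m ^ (k * y)) • (genC F m b ^ (k + x) * genA F m b ^ (l + y)) := by
  have h : genA F m b * genC F m b = m • (genC F m b * genA F m b) :=
    aux_comm m b _ _ (gen_rel F m b)
  rw [Ring.lie_def, aux_bracket m _ _ h, aux_bracket m _ _ h, add_comm x k,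
    add_comm y l, mul_comm y k]
  exact (sub_smul (m ^ (l * x)) (m ^ (k * y)) (genC F m b ^ (k + x) * genA F m b ^ (l + y))).symm
end
end

section
/- For all integers x, y ≥ 1, the relation [B, B^y C^x] = (1 − m^x)·B^{y+1} C^x holds in R. -/
noncomputable section

open FreeAlgebra

theorem aux_AB (F : Type*) [Field F] (m b : F) :
    genA F m b * genB F m b = m • (genB F m b * genA F m b) + b • (1 : TwistAlg F m b) := by
  have h := RingQuot.mkAlgHom_rel F (s := twistRel F m b) ⟨rfl, rfl⟩
  rw [map_mul, map_add, map_smul, map_mul, AlgHom.commutes, Algebra.algebraMap_eq_smul_one] at h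
  exact h

theorem aux_CB (F : Type*) [Field F] (m b : F) :
    genC F m b * genB F m b = m • (genB F m b * genC F m b) := by
  have h := aux_AB F m b
  have h2 : genB F m b * (genA F m b * genB F m b) =
      m • (genB F m b * (genB F m b * genA F m b)) + b • genB F m b := by
    rw [h, mul_add, mul_smul_comm, mul_smul_comm, mul_one]
  have h1 : (genA F m b * genB F m b) * genB F m b =
      m • (genB F m b * (genA F m b * genB F m b)) + b • genB F m b := by
    conv_lhs => rw [h]
    rw [add_mul, smul_mul_assoc, smul_mul_assoc, one_mul, mul_assoc]
  unfold genC
  rw [sub_mul, mul_sub, smul_sub, h1, mul_assoc (genB F m b), eq_sub_of_add_eq h2.symm]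
  abel

theorem aux_CxB (F : Type*) [Field F] (m b : F) (x : ℕ) :
    genC F m b ^ x * genB F m b = m ^ x • (genB F m b * genC F m b ^ x) := by
  induction x with
  | zero => simp
  | succ n ih =>
    rw [pow_succ, mul_assoc, aux_CB, mul_smul_comm, ← mul_assoc, ih, smul_mul_assoc, smul_smul,
      mul_assoc, ← pow_succ']

theorem stmt10 (F : Type*) [Field F] (m b : F) (hm0 : m ≠ 0) (hm1 : m ≠ 1)
    (x y : ℕ) (hx : 1 ≤ x) (hy : 1 ≤ y) :
    ⁅genB F m b, genB F m b ^ y * genC F m b ^ x⁆ =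
      (1 - m ^ x) • (genB F m b ^ (y + 1) * genC F m b ^ x) := by
  rw [Ring.lie_def, mul_assoc, aux_CxB, mul_smul_comm, ← mul_assoc, ← mul_assoc, ← pow_succ,
    ← pow_succ']
  have key : ∀ Z : TwistAlg F m b, Z - m ^ x • Z = (1 - m ^ x) • Z := fun Z => by
    have h := sub_smul (1 : F) (m ^ x) Z
    have h1 := one_smul F Z
    exact (h.trans (congrArg (fun w => w - m ^ x • Z) h1)).symm
  exact key _
end
end

section
/- For all integers x, y ≥ 1, the relation m^x(m − 1)·[B, C^x A^y] = (1 − m^{x+y})·C^{x+1} A^{y−1} + (m^x − 1)·b·C^x A^{y−1} holds in R (equivalently, [B, C^x A^y] = ((m^{−x} − m^y)/(m−1))·C^{x+1} A^{y−1} + ((1 − m^{−x})/(m−1))·b·C^x A^{y−1}). -/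
noncomputable section

open FreeAlgebra

theorem twist_aux {F R : Type*} [Field F] [Ring R] [Algebra F R] (m b : F) (A B C : R)
    (h : A * B = m • (B * A) + algebraMap F R b) (hC : C = A * B - B * A) (x y : ℕ) :
    (m ^ x * (m - 1)) • (B * (C ^ x * A ^ (y+1)) - C ^ x * A ^ (y+1) * B) =
      (1 - m ^ (x + (y+1))) • (C ^ (x + 1) * A ^ y) + ((m ^ x - 1) * b) • (C ^ x * A ^ y) := by
  rw [Algebra.algebraMap_eq_smul_one] at h
  have hBA : (m - 1) • (B * A) = C - b • (1 : R) := by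
    rw [hC, h]; module
  have hAB : (m - 1) • (A * B) = m • C - b • (1 : R) := by
    rw [hC, h]; module
  have hC' : C = (m - 1) • (B * A) + b • (1 : R) := by rw [hBA]; abel
  have hAC : A * C = m • (C * A) := by
    rw [hC']
    simp only [mul_add, add_mul, mul_smul_comm, smul_mul_assoc, mul_one, one_mul, ← mul_assoc, h]
    module
  have hCB : C * B = m • (B * C) := by
    rw [hC']
    simp only [mul_add, add_mul, mul_smul_comm, smul_mul_assoc, mul_one, one_mul, mul_assoc, h]
    module
  have hCx : ∀ x : ℕ, C ^ x * B = m ^ x • (B * C ^ x) := by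
    intro x
    induction x with
    | zero => simp
    | succ n ih =>
      rw [pow_succ, mul_assoc, hCB, mul_smul_comm, ← mul_assoc, ih, smul_mul_assoc, smul_smul,
        mul_assoc, pow_succ, mul_comm]
  have hAy : ∀ y : ℕ, A ^ y * C = m ^ y • (C * A ^ y) := by
    intro y
    induction y with
    | zero => simp
    | succ n ih =>
      rw [pow_succ, mul_assoc, hAC, mul_smul_comm, ← mul_assoc, ih, smul_mul_assoc, smul_smul,
        mul_assoc, pow_succ, mul_comm]
  have e1 : (m ^ x * (m - 1)) • (B * (C ^ x * A ^ (y+1)))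
      = C ^ (x+1) * A ^ y - b • (C ^ x * A ^ y) := by
    have : (m ^ x * (m - 1)) • (B * (C ^ x * A ^ (y+1)))
      = (C ^ x * ((m - 1) • (B * A))) * A ^ y := by
      rw [mul_smul_comm, ← mul_assoc (C ^ x) B A, hCx, pow_succ' A y]
      simp only [smul_mul_assoc, smul_smul, mul_assoc]
      rw [mul_comm]
    rw [this, hBA, mul_sub, sub_mul, pow_succ]
    simp
  have e2 : (m - 1) • (C ^ x * A ^ (y+1) * B)
      = m ^ (y+1) • (C ^ (x+1) * A ^ y) - b • (C ^ x * A ^ y) := by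
    have : (m - 1) • (C ^ x * A ^ (y+1) * B) = C ^ x * (A ^ y * ((m - 1) • (A * B))) := by
      simp only [mul_smul_comm, pow_succ, mul_assoc]
    rw [this, hAB, mul_sub, mul_smul_comm, hAy]
    simp only [mul_sub, mul_smul_comm, smul_smul, mul_one, pow_succ, mul_assoc]
    rw [mul_comm m]
  rw [smul_sub, e1, mul_smul, e2, pow_add m x (y+1)]
  module

theorem stmt14 (F : Type*) [Field F] (m b : F) (hm0 : m ≠ 0) (hm1 : m ≠ 1)
    (x y : ℕ) (hx : 1 ≤ x) (hy : 1 ≤ y) :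
    (m ^ x * (m - 1)) • ⁅genB F m b, genC F m b ^ x * genA F m b ^ y⁆ =
      (1 - m ^ (x + y)) • (genC F m b ^ (x + 1) * genA F m b ^ (y - 1)) +
        ((m ^ x - 1) * b) • (genC F m b ^ x * genA F m b ^ (y - 1)) := by
  obtain ⟨y, rfl⟩ : ∃ k, y = k + 1 := ⟨y - 1, by omega⟩
  have h : genA F m b * genB F m b =
      m • (genB F m b * genA F m b) + algebraMap F (TwistAlg F m b) b := by
    have := RingQuot.mkAlgHom_rel F (s := twistRel F m b) ⟨rfl, rfl⟩
    simp only [map_mul, map_add, map_smul, AlgHom.commutes] at this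
    exact this
  exact twist_aux m b _ _ _ h rfl x y
end
end

section
/- For every integer n ≥ 1, there exist elements f and g in the unital subalgebra of R generated by C (i.e., polynomials in C) such that (m−1)^n·A^n B^n = (−1)^n b^n·1 + C·f and (m−1)^n·B^n A^n = (−1)^n b^n·1 + C·g. -/
noncomputable section

open FreeAlgebra

theorem aux_step {F R : Type*} [Field F] [Ring R] [Algebra F R] (C X f : R) (c b s : F)
    (h : X = s • (1 : R) + C * f) (hf : f ∈ Algebra.adjoin F {C}) :
    ∃ g ∈ Algebra.adjoin F {C}, (c • C - b • (1 : R)) * X = (-1 * b * s) • (1 : R) + C * g := by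
  have hC : C ∈ Algebra.adjoin F {C} := Algebra.self_mem_adjoin_singleton F C
  refine ⟨(c * s) • (1 : R) + c • (C * f) - b • f, ?_, ?_⟩
  · exact sub_mem (add_mem (Subalgebra.smul_mem _ (one_mem _) _)
      (Subalgebra.smul_mem _ (mul_mem hC hf) _)) (Subalgebra.smul_mem _ hf _)
  · subst h
    simp only [sub_mul, mul_add, mul_sub, mul_smul_comm, smul_mul_assoc, mul_one, one_mul, smul_add,
      smul_smul]
    module

theorem aux_main {F R : Type*} [Field F] [Ring R] [Algebra F R] (m b : F) (hm0 : m ≠ 0)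
    (A B C : R) (hBA : (m - 1) • (B * A) = C - b • (1 : R))
    (hAB : (m - 1) • (A * B) = m • C - b • (1 : R))
    (hAC : A * C = m • (C * A)) (hBC : B * C = m⁻¹ • (C * B)) (n : ℕ) :
    ∃ f ∈ Algebra.adjoin F {C}, ∃ g ∈ Algebra.adjoin F {C},
      (m - 1) ^ n • (A ^ n * B ^ n) = ((-1 : F) ^ n * b ^ n) • (1 : R) + C * f ∧
      (m - 1) ^ n • (B ^ n * A ^ n) = ((-1 : F) ^ n * b ^ n) • (1 : R) + C * g := by
  have key : ∀ (X : R) (c : F), X * C = c • (C * X) → ∀ k : ℕ, X ^ k * C = c ^ k • (C * X ^ k) := by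
    intro X c h k
    induction k with
    | zero => simp
    | succ k ih =>
      rw [pow_succ, mul_assoc, h, mul_smul_comm, ← mul_assoc, ih, smul_mul_assoc, smul_smul,
        mul_assoc, pow_succ c, mul_comm]
  have step : ∀ (X Y : R) (c d : F), X * C = c • (C * X) →
      (m - 1) • (X * Y) = d • C - b • (1 : R) → ∀ k : ℕ,
      (m - 1) ^ (k + 1) • (X ^ (k + 1) * Y ^ (k + 1)) =
        ((d * c ^ k) • C - b • (1 : R)) * ((m - 1) ^ k • (X ^ k * Y ^ k)) := by
    intro X Y c d h h2 k
    have e : X ^ (k + 1) * Y ^ (k + 1) = X ^ k * (X * Y) * Y ^ k := by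
      rw [pow_succ, pow_succ']; simp only [mul_assoc]
    have e2 : X ^ k * ((m - 1) • (X * Y)) = ((d * c ^ k) • C - b • (1 : R)) * X ^ k := by
      rw [h2, mul_sub, mul_smul_comm, key X c h k, sub_mul]
      simp [smul_smul]
    rw [mul_smul_comm] at e2
    rw [e, pow_succ, mul_smul, ← smul_mul_assoc (m - 1), e2, mul_assoc, mul_smul_comm]
  induction n with
  | zero => exact ⟨0, zero_mem _, 0, zero_mem _, by simp, by simp⟩
  | succ k ih =>
    obtain ⟨f, hf, g, hg, h1, h2⟩ := ih
    obtain ⟨f', hf', h1'⟩ := aux_step C _ f (m * m ^ k) b _ h1 hf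
    obtain ⟨g', hg', h2'⟩ := aux_step C _ g (1 * m⁻¹ ^ k) b _ h2 hg
    have es : (-1 : F) ^ (k + 1) * b ^ (k + 1) = -1 * b * ((-1) ^ k * b ^ k) := by ring
    refine ⟨f', hf', g', hg', ?_, ?_⟩
    · rw [step A B m m hAC hAB, h1', es]
    · rw [step B A m⁻¹ 1 hBC (by rw [one_smul]; exact hBA), h2', es]

theorem stmt16 (F : Type*) [Field F] (m b : F) (hm0 : m ≠ 0) (hm1 : m ≠ 1)
    (n : ℕ) (hn : 1 ≤ n) :
    ∃ f ∈ Algebra.adjoin F {genC F m b}, ∃ g ∈ Algebra.adjoin F {genC F m b},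
      (m - 1) ^ n • (genA F m b ^ n * genB F m b ^ n) =
        ((-1 : F) ^ n * b ^ n) • (1 : TwistAlg F m b) + genC F m b * f ∧
      (m - 1) ^ n • (genB F m b ^ n * genA F m b ^ n) =
        ((-1 : F) ^ n * b ^ n) • (1 : TwistAlg F m b) + genC F m b * g := by
  have rel : genA F m b * genB F m b = m • (genB F m b * genA F m b) + b • (1 : TwistAlg F m b) := by
    have h := RingQuot.mkAlgHom_rel F (s := twistRel F m b) ⟨rfl, rfl⟩
    simp only [map_mul, map_add, map_smul, Algebra.algebraMap_eq_smul_one, map_one] at h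
    exact h
  have hC : genC F m b = genA F m b * genB F m b - genB F m b * genA F m b := rfl
  generalize genC F m b = C at *
  generalize genA F m b = A at *
  generalize genB F m b = B at *
  have hBA : (m - 1) • (B * A) = C - b • (1 : TwistAlg F m b) := by
    rw [hC, rel]; module
  have hAB : (m - 1) • (A * B) = m • C - b • (1 : TwistAlg F m b) := by
    rw [hC, rel]; module
  have hBA' : C = (m - 1) • (B * A) + b • (1 : TwistAlg F m b) := by rw [hBA]; abel
  have hAC : A * C = m • (C * A) := by
    have : A * C = ((m - 1) • (A * B)) * A + b • A := by
      rw [hBA']; simp [mul_add, mul_assoc]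
    rw [this, hAB]; simp [sub_mul]
  have hCB : C * B = m • (B * C) := by
    have : C * B = B * ((m - 1) • (A * B)) + b • B := by
      rw [hBA']; simp [add_mul, mul_assoc]
    rw [this, hAB]; simp [mul_sub]
  have hBC : B * C = m⁻¹ • (C * B) := by
    rw [hCB, smul_smul, inv_mul_cancel₀ hm0, one_smul]
  exact aux_main m b hm0 A B C hBA hAB hAC hBC n
end
end

section
/- For all integers u, v, x, y ≥ 1, the element [C^u A^v, B^y C^x] of R lies in the F-linear span of the set {C^k : k ≥ 1} ∪ {C^k A^l : k, l ≥ 1} ∪ {B^l C^k : k, l ≥ 1}. -/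
noncomputable section

open FreeAlgebra

theorem aux17 {F R : Type*} [Field F] [Ring R] [Algebra F R] (m b : F) (hm0 : m ≠ 0) (hm1 : m ≠ 1)
    (A B C : R) (hAB : A * B = m • (B * A) + algebraMap F R b) (hC : C = A * B - B * A)
    (u v x y : ℕ) (hu : 1 ≤ u) :
    C ^ u * A ^ v * (B ^ y * C ^ x) - B ^ y * C ^ x * (C ^ u * A ^ v) ∈
      Submodule.span F
        ({w | ∃ k : ℕ, 1 ≤ k ∧ w = C ^ k} ∪
         {w | ∃ k l : ℕ, 1 ≤ k ∧ 1 ≤ l ∧ w = C ^ k * A ^ l} ∪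
         {w | ∃ k l : ℕ, 1 ≤ k ∧ 1 ≤ l ∧ w = B ^ l * C ^ k}) := by
  have hm : m - 1 ≠ 0 := sub_ne_zero.mpr hm1
  have hC' : C = (m - 1) • (B * A) + b • (1 : R) := by
    rw [hC, hAB, Algebra.algebraMap_eq_smul_one]; module
  rw [Algebra.algebraMap_eq_smul_one] at hAB
  have hBA : B * A = (m - 1)⁻¹ • C + (-(m - 1)⁻¹ * b) • (1 : R) := by
    rw [hC', smul_add, smul_smul, smul_smul, inv_mul_cancel₀ hm]; module
  have hAB' : A * B = (1 + (m - 1)⁻¹) • C + (-(m - 1)⁻¹ * b) • (1 : R) := by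
    have : A * B = C + B * A := by rw [hC]; abel
    rw [this, hBA]; module
  have hAC : A * C = m • (C * A) := by
    have : A * C = (m - 1) • ((A * B) * A) + b • A := by
      rw [hC', mul_add, mul_smul_comm, mul_smul_comm, mul_one, mul_assoc]
    rw [this, hAB, hC']
    simp only [add_mul, smul_mul_assoc, one_mul]; module
  have hCB : C * B = m • (B * C) := by
    have : C * B = (m - 1) • (B * (A * B)) + b • B := by
      rw [hC', add_mul, smul_mul_assoc, smul_mul_assoc, one_mul, mul_assoc]
    rw [this, hAB, hC']
    simp only [mul_add, mul_smul_comm, mul_one]; module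
  have hBC : B * C = m⁻¹ • (C * B) := by
    rw [hCB, smul_smul, inv_mul_cancel₀ hm0, one_smul]
  -- general power commutation
  have comm1 : ∀ (X Y : R) (q : F), X * Y = q • (Y * X) → ∀ n : ℕ,
      X * Y ^ n = q ^ n • (Y ^ n * X) := by
    intro X Y q h n
    induction n with
    | zero => simp
    | succ n ih =>
      rw [pow_succ, ← mul_assoc, ih, smul_mul_assoc, mul_assoc, h, mul_smul_comm, smul_smul,
        ← mul_assoc, ← pow_succ, ← pow_succ]
  have comm2 : ∀ (X Y : R) (q : F), X * Y = q • (Y * X) → ∀ n : ℕ,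
      X ^ n * Y = q ^ n • (Y * X ^ n) := by
    intro X Y q h n
    induction n with
    | zero => simp
    | succ n ih =>
      rw [pow_succ', mul_assoc, ih, mul_smul_comm, ← mul_assoc, h, smul_mul_assoc, smul_smul,
        mul_assoc, ← pow_succ', ← pow_succ]
  have comm3 : ∀ (X Y : R) (q : F), X * Y = q • (Y * X) → ∀ n k : ℕ,
      X ^ n * Y ^ k = (q ^ n) ^ k • (Y ^ k * X ^ n) := fun X Y q h n k =>
    comm1 _ _ _ (comm2 X Y q h n) k
  set S := Submodule.span F
        ({w | ∃ k : ℕ, 1 ≤ k ∧ w = C ^ k} ∪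
         {w | ∃ k l : ℕ, 1 ≤ k ∧ 1 ≤ l ∧ w = C ^ k * A ^ l} ∪
         {w | ∃ k l : ℕ, 1 ≤ k ∧ 1 ≤ l ∧ w = B ^ l * C ^ k}) with hS
  have s1 : ∀ k l : ℕ, 1 ≤ k → C ^ k * A ^ l ∈ S := by
    intro k l hk
    apply Submodule.subset_span
    rcases Nat.eq_zero_or_pos l with rfl | hl
    · exact Or.inl (Or.inl ⟨k, hk, by simp⟩)
    · exact Or.inl (Or.inr ⟨k, l, hk, hl, rfl⟩)
  have s2 : ∀ k l : ℕ, 1 ≤ k → B ^ l * C ^ k ∈ S := by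
    intro k l hk
    apply Submodule.subset_span
    rcases Nat.eq_zero_or_pos l with rfl | hl
    · exact Or.inl (Or.inl ⟨k, hk, by simp⟩)
    · exact Or.inr ⟨k, l, hk, hl, rfl⟩
  have L1 : ∀ v y k x : ℕ, 1 ≤ k → C ^ k * A ^ v * (B ^ y * C ^ x) ∈ S := by
    intro v
    induction v with
    | zero =>
      intro y k x hk
      rw [pow_zero, mul_one, ← mul_assoc, comm3 _ _ _ hCB, smul_mul_assoc, mul_assoc, ← pow_add]
      exact S.smul_mem _ (s2 _ _ (by omega))
    | succ v ih =>
      intro y k x hk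
      cases y with
      | zero =>
        rw [pow_zero, one_mul, mul_assoc, comm3 _ _ _ hAC, mul_smul_comm, ← mul_assoc, ← pow_add]
        exact S.smul_mem _ (s1 _ _ (by omega))
      | succ y =>
        have e : C ^ k * A ^ (v + 1) * (B ^ (y + 1) * C ^ x)
            = C ^ k * A ^ v * (A * B) * (B ^ y * C ^ x) := by
          rw [pow_succ A, pow_succ' B]; simp only [mul_assoc]
        have e2 : C ^ k * A ^ v * C = m ^ v • (C ^ (k + 1) * A ^ v) := by
          rw [mul_assoc, comm2 _ _ _ hAC, mul_smul_comm, ← mul_assoc, ← pow_succ]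
        rw [e, hAB', mul_add, mul_smul_comm, mul_smul_comm, mul_one, e2, add_mul]
        simp only [smul_mul_assoc]
        exact S.add_mem (S.smul_mem _ (S.smul_mem _ (ih _ _ _ (by omega))))
          (S.smul_mem _ (ih _ _ _ hk))
  have L2 : ∀ y v k : ℕ, 1 ≤ k → B ^ y * C ^ k * A ^ v ∈ S := by
    intro y
    induction y with
    | zero =>
      intro v k hk
      rw [pow_zero, one_mul]
      exact s1 _ _ hk
    | succ y ih =>
      intro v k hk
      cases v with
      | zero => rw [pow_zero, mul_one]; exact s2 _ _ hk
      | succ v =>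
        have e : B ^ (y + 1) * C ^ k * A ^ (v + 1)
            = m⁻¹ ^ k • (B ^ y * C ^ k * (B * A) * A ^ v) := by
          rw [pow_succ B, mul_assoc (B ^ y), comm1 _ _ _ hBC, pow_succ' A]
          simp only [mul_assoc, mul_smul_comm, smul_mul_assoc]
        rw [e, hBA, mul_add, mul_smul_comm, mul_smul_comm, mul_one, mul_assoc (B ^ y) _ C,
          ← pow_succ, add_mul]
        simp only [smul_mul_assoc]
        exact S.smul_mem _ (S.add_mem (S.smul_mem _ (ih _ _ (by omega)))
          (S.smul_mem _ (ih _ _ hk)))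
  refine S.sub_mem (L1 _ _ _ _ hu) ?_
  rw [← mul_assoc, mul_assoc (B ^ y), ← pow_add]
  exact L2 _ _ _ (by omega)

theorem stmt17 (F : Type*) [Field F] (m b : F) (hm0 : m ≠ 0) (hm1 : m ≠ 1)
    (u v x y : ℕ) (hu : 1 ≤ u) (hv : 1 ≤ v) (hx : 1 ≤ x) (hy : 1 ≤ y) :
    ⁅genC F m b ^ u * genA F m b ^ v, genB F m b ^ y * genC F m b ^ x⁆ ∈
      Submodule.span F
        ({w | ∃ k : ℕ, 1 ≤ k ∧ w = genC F m b ^ k} ∪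
         {w | ∃ k l : ℕ, 1 ≤ k ∧ 1 ≤ l ∧ w = genC F m b ^ k * genA F m b ^ l} ∪
         {w | ∃ k l : ℕ, 1 ≤ k ∧ 1 ≤ l ∧ w = genB F m b ^ l * genC F m b ^ k}) := by
  rw [Ring.lie_def]
  refine aux17 m b hm0 hm1 (genA F m b) (genB F m b) (genC F m b) ?_ rfl u v x y hu
  have h := RingQuot.mkAlgHom_rel F (s := twistRel F m b) ⟨rfl, rfl⟩
  rw [map_mul, map_add, map_smul, map_mul, AlgHom.commutes] at h
  exact h
end
end
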